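/- Evolution of the velocity Fisher information under the relaxation collision operator: if h : [0,∞) × 𝕋^d × ℝ^d → ℝ is smooth, bounded above and below by positive constants, has all partial derivatives bounded, and solves ∂_t h = λ(Πh − h) with λ > 0, then for all t ≥ 0: (d/dt) I^V(h_t) = −λ ( I^V(h_t) + I^{ΠV/V}(h_t) ). -/

import Mathlib

/-!
The integrand of `I^V` is the density `F = |∇_v h|² / h`. As `h` is bounded below by a positive
constant and its first two derivatives are bounded, `F` and its differential are bounded, so `I^V`
may be differentiated under the integral against the finite measure `μ`.

At a time where `∂_t h = λ(Πh - h)`, the function `Πh` is constant along the velocity directions,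
and symmetry of second derivatives gives `∂_t ∇_v h = ∇_v ∂_t h = -λ ∇_v h`. The quotient rule then
yields `∂_t F = -2λ |∇_v h|²/h - λ (|∇_v h|²/h²) (Πh - h) = -λ (F + F · Πh/h)`, whose integral is
the claim.
-/

open MeasureTheory Real Filter

noncomputable section

/-- The standard Gaussian density `ℳ(v) = (2π)^{-d/2} exp(-|v|²/2)` on `ℝ^d`. -/
def gauss (d : ℕ) (v : Fin d → ℝ) : ℝ :=
  (2 * Real.pi) ^ (-(d : ℝ) / 2) * Real.exp (-(∑ i, v i ^ 2) / 2)

/-- Fundamental domain `[0,1]^d` of the torus `𝕋^d`; the normalized Lebesgue measure on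
the torus is the restriction of Lebesgue measure to this cube. -/
def cube (d : ℕ) : Set (Fin d → ℝ) := Set.Icc 0 1

/-- A function of `(x,v)` represents a function on `𝕋^d × ℝ^d` iff it is `ℤ^d`-periodic in `x`. -/
def IsPeriodic (d : ℕ) (f : (Fin d → ℝ) → (Fin d → ℝ) → ℝ) : Prop :=
  ∀ (x v : Fin d → ℝ) (k : Fin d → ℤ), f (x + fun i => (k i : ℝ)) v = f x v

/-- The projection `Πf(x) = ∫ f(x,u) ℳ(u) du`. -/
def proj (d : ℕ) (f : (Fin d → ℝ) → (Fin d → ℝ) → ℝ) (x : Fin d → ℝ) : ℝ :=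
  ∫ u, f x u * gauss d u

/-- Euclidean dot product on `ℝ^d`. -/
def dotp (d : ℕ) (a b : Fin d → ℝ) : ℝ := ∑ i, a i * b i

/-- Squared Euclidean norm on `ℝ^d`. -/
def nsq (d : ℕ) (a : Fin d → ℝ) : ℝ := ∑ i, a i ^ 2

/-- Gradient in the `x` variable. -/
def gradx (d : ℕ) (f : (Fin d → ℝ) → (Fin d → ℝ) → ℝ) (x v : Fin d → ℝ) : Fin d → ℝ :=
  fun i => fderiv ℝ (fun y => f y v) x (Pi.single i 1)

/-- Gradient in the `v` variable. -/
def gradv (d : ℕ) (f : (Fin d → ℝ) → (Fin d → ℝ) → ℝ) (x v : Fin d → ℝ) : Fin d → ℝ :=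
  fun i => fderiv ℝ (fun w => f x w) v (Pi.single i 1)

/-- Gradient of a function of `x` only. -/
def grad1 (d : ℕ) (g : (Fin d → ℝ) → ℝ) (x : Fin d → ℝ) : Fin d → ℝ :=
  fun i => fderiv ℝ g x (Pi.single i 1)

/-- Laplacian in the `v` variable. -/
def lapv (d : ℕ) (f : (Fin d → ℝ) → (Fin d → ℝ) → ℝ) (x v : Fin d → ℝ) : ℝ :=
  ∑ i, fderiv ℝ (fun w => gradv d f x w i) v (Pi.single i 1)

/-- Integral against `μ = ℳ(v) dv dx` on `𝕋^d × ℝ^d`. -/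
def intMu (d : ℕ) (F : (Fin d → ℝ) → (Fin d → ℝ) → ℝ) : ℝ :=
  ∫ x in cube d, ∫ v, F x v * gauss d v

/-- `I^X(h) = ∫ |∇_x h|²/h dμ`. -/
def IX (d : ℕ) (h : (Fin d → ℝ) → (Fin d → ℝ) → ℝ) : ℝ :=
  intMu d fun x v => nsq d (gradx d h x v) / h x v

/-- `I^V(h) = ∫ |∇_v h|²/h dμ`. -/
def IV (d : ℕ) (h : (Fin d → ℝ) → (Fin d → ℝ) → ℝ) : ℝ :=
  intMu d fun x v => nsq d (gradv d h x v) / h x v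

/-- `I^M(h) = ∫ (∇_x h · ∇_v h)/h dμ`. -/
def IM (d : ℕ) (h : (Fin d → ℝ) → (Fin d → ℝ) → ℝ) : ℝ :=
  intMu d fun x v => dotp d (gradx d h x v) (gradv d h x v) / h x v

/-- The full Fisher information `I(h) = ∫ |∇_{x,v} h|²/h dμ`. -/
def Ifull (d : ℕ) (h : (Fin d → ℝ) → (Fin d → ℝ) → ℝ) : ℝ :=
  intMu d fun x v => (nsq d (gradx d h x v) + nsq d (gradv d h x v)) / h x v

/-- `I^{ΠX}(h) = ∫_{𝕋^d} |∇_x Πh|²/Πh dx`. -/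
def IPiX (d : ℕ) (h : (Fin d → ℝ) → (Fin d → ℝ) → ℝ) : ℝ :=
  ∫ x in cube d, nsq d (grad1 d (proj d h) x) / proj d h x

/-- `I^{ΠX/X}(h) = ∫ (|∇_x(Πh/h)|²/(Πh/h)) h dμ`. -/
def IPiXX (d : ℕ) (h : (Fin d → ℝ) → (Fin d → ℝ) → ℝ) : ℝ :=
  intMu d fun x v =>
    nsq d (gradx d (fun y w => proj d h y / h y w) x v) / (proj d h x / h x v) * h x v

/-- `I^{ΠV/V}(h) = ∫ (|∇_v h|²/h)(Πh/h) dμ`. -/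
def IPiVV (d : ℕ) (h : (Fin d → ℝ) → (Fin d → ℝ) → ℝ) : ℝ :=
  intMu d fun x v => nsq d (gradv d h x v) / h x v * (proj d h x / h x v)

/-- The relative entropy `H(h) = ∫ h log h dμ`. -/
def Hent (d : ℕ) (h : (Fin d → ℝ) → (Fin d → ℝ) → ℝ) : ℝ :=
  intMu d fun x v => h x v * Real.log (h x v)

/-- The projected entropy `H_Π(h) = ∫_{𝕋^d} Πh log Πh dx`. -/
def HPi (d : ℕ) (h : (Fin d → ℝ) → (Fin d → ℝ) → ℝ) : ℝ :=
  ∫ x in cube d, proj d h x * Real.log (proj d h x)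

/-- The local average speed `U(x) = ∫ v h(x,v) ℳ(v) dv`. -/
def Uvec (d : ℕ) (h : (Fin d → ℝ) → (Fin d → ℝ) → ℝ) (x : Fin d → ℝ) : Fin d → ℝ :=
  fun i => ∫ v, v i * h x v * gauss d v

/-- The divergence `∇_x · U`. -/
def divU (d : ℕ) (h : (Fin d → ℝ) → (Fin d → ℝ) → ℝ) (x : Fin d → ℝ) : ℝ :=
  ∑ i, fderiv ℝ (fun y => Uvec d h y i) x (Pi.single i 1)

/-- The `p`-entropy `H^{(p)}(h) = ∫ (h^p - h)/(p(p-1)) dμ`. -/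
def Hp (d : ℕ) (p : ℝ) (h : (Fin d → ℝ) → (Fin d → ℝ) → ℝ) : ℝ :=
  intMu d fun x v => (h x v ^ p - h x v) / (p * (p - 1))

/-- The projected `p`-entropy `H_Π^{(p)}(h) = ∫_{𝕋^d} ((Πh)^p - Πh)/(p(p-1)) dx`. -/
def HpPi (d : ℕ) (p : ℝ) (h : (Fin d → ℝ) → (Fin d → ℝ) → ℝ) : ℝ :=
  ∫ x in cube d, ((proj d h x) ^ p - proj d h x) / (p * (p - 1))

/-- The `p`-Fisher information `I^{(p)}(h) = ∫ h^{p-2} |∇_{x,v} h|² dμ`. -/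
def Ipfull (d : ℕ) (p : ℝ) (h : (Fin d → ℝ) → (Fin d → ℝ) → ℝ) : ℝ :=
  intMu d fun x v => h x v ^ (p - 2) * (nsq d (gradx d h x v) + nsq d (gradv d h x v))

/-- The spatial `p`-Fisher information `∫ h^{p-2} |∇_x h|² dμ`. -/
def IpX (d : ℕ) (p : ℝ) (h : (Fin d → ℝ) → (Fin d → ℝ) → ℝ) : ℝ :=
  intMu d fun x v => h x v ^ (p - 2) * nsq d (gradx d h x v)

/-- Regularity of a time-dependent `h`: smooth, periodic in `x`, bounded above and below by
positive constants, with all partial derivatives bounded. -/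
def Regular (d : ℕ) (h : ℝ → (Fin d → ℝ) → (Fin d → ℝ) → ℝ) : Prop :=
  ContDiff ℝ (⊤ : ℕ∞) (fun q : ℝ × (Fin d → ℝ) × (Fin d → ℝ) => h q.1 q.2.1 q.2.2) ∧
  (∀ t, IsPeriodic d (h t)) ∧
  (∃ c C : ℝ, 0 < c ∧ ∀ t x v, c ≤ h t x v ∧ h t x v ≤ C) ∧
  (∀ n : ℕ, ∃ C : ℝ, ∀ q : ℝ × (Fin d → ℝ) × (Fin d → ℝ),
    ‖iteratedFDeriv ℝ n (fun r : ℝ × (Fin d → ℝ) × (Fin d → ℝ) => h r.1 r.2.1 r.2.2) q‖ ≤ C)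

/-- Regularity of a time-independent `h`: smooth, periodic in `x`, bounded above and below by
positive constants, with bounded gradient. -/
def RegularStatic (d : ℕ) (h : (Fin d → ℝ) → (Fin d → ℝ) → ℝ) : Prop :=
  ContDiff ℝ (⊤ : ℕ∞) (fun q : (Fin d → ℝ) × (Fin d → ℝ) => h q.1 q.2) ∧
  IsPeriodic d h ∧
  (∃ c C : ℝ, 0 < c ∧ ∀ x v, c ≤ h x v ∧ h x v ≤ C) ∧
  (∃ C : ℝ, ∀ q : (Fin d → ℝ) × (Fin d → ℝ),
    ‖fderiv ℝ (fun r : (Fin d → ℝ) × (Fin d → ℝ) => h r.1 r.2) q‖ ≤ C)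

/-- `h` solves the linear relaxation Boltzmann equation `∂_t h + v·∇_x h = λ(Πh - h)` for `t ≥ 0`. -/
def SolvesLRB (d : ℕ) (lam : ℝ) (h : ℝ → (Fin d → ℝ) → (Fin d → ℝ) → ℝ) : Prop :=
  ∀ t x v, 0 ≤ t →
    deriv (fun s => h s x v) t + dotp d v (gradx d (h t) x v)
      = lam * (proj d (h t) x - h t x v)

/-- `h` solves the free transport equation `∂_t h + v·∇_x h = 0` for `t ≥ 0`. -/
def SolvesTransport (d : ℕ) (h : ℝ → (Fin d → ℝ) → (Fin d → ℝ) → ℝ) : Prop :=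
  ∀ t x v, 0 ≤ t →
    deriv (fun s => h s x v) t + dotp d v (gradx d (h t) x v) = 0

/-- `h` solves the pure relaxation equation `∂_t h = λ(Πh - h)` for `t ≥ 0`. -/
def SolvesCollision (d : ℕ) (lam : ℝ) (h : ℝ → (Fin d → ℝ) → (Fin d → ℝ) → ℝ) : Prop :=
  ∀ t x v, 0 ≤ t →
    deriv (fun s => h s x v) t = lam * (proj d (h t) x - h t x v)

/-- `h` solves the kinetic Fokker–Planck equation `∂_t h + v·∇_x h = Δ_v h - v·∇_v h` for `t ≥ 0`. -/
def SolvesKFP (d : ℕ) (h : ℝ → (Fin d → ℝ) → (Fin d → ℝ) → ℝ) : Prop :=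
  ∀ t x v, 0 ≤ t →
    deriv (fun s => h s x v) t + dotp d v (gradx d (h t) x v)
      = lapv d (h t) x v - dotp d v (gradv d (h t) x v)

section FisherDensity

variable {E ι : Type*} [NormedAddCommGroup E] [NormedSpace ℝ E] [Fintype ι]
  {e : ι → E} {τ q : E} {H : E → ℝ}

/-- The Fisher information density `∑ᵢ (∂_{eᵢ} H)² / H` along a family `e` of directions. On phase
space `ℝ × ℝ^d × ℝ^d`, with `e` the velocity directions, it is the integrand of `I^V`. -/
def fisherDensity (e : ι → E) (H : E → ℝ) (q : E) : ℝ :=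
  (∑ i, fderiv ℝ H q (e i) ^ 2) / H q

lemma contDiffAt_fisherDensity (hH : ContDiffAt ℝ 2 H q) (hne : H q ≠ 0) :
    ContDiffAt ℝ 1 (fisherDensity e H) q := by
  have : ContDiffAt ℝ 1 (fderiv ℝ H) q := hH.fderiv_right (by norm_num)
  exact ContDiffAt.div (by fun_prop) (hH.of_le (by norm_num)) hne

lemma abs_fisherDensity_le {c M : ℝ} (hc : 0 < c) (hlow : c ≤ H q) (hM : ‖fderiv ℝ H q‖ ≤ M) :
    |fisherDensity e H q| ≤ (∑ i, ‖e i‖ ^ 2) * M ^ 2 / c := by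
  rw [fisherDensity, abs_div, abs_of_pos (hc.trans_le hlow),
    abs_of_nonneg (Finset.sum_nonneg fun i _ => sq_nonneg _), Finset.sum_mul]
  gcongr with i
  rw [← sq_abs, ← mul_pow, mul_comm]
  gcongr
  exact (fderiv ℝ H q).le_of_opNorm_le hM (e i)

lemma fderiv_fisherDensity_apply (hH : ContDiffAt ℝ 2 H q) (hne : H q ≠ 0) :
    fderiv ℝ (fisherDensity e H) q τ =
      2 * (∑ i, fderiv ℝ H q (e i) * fderiv ℝ (fderiv ℝ H) q τ (e i)) / H q
        - fisherDensity e H q * (fderiv ℝ H q τ / H q) := by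
  have hH' : DifferentiableAt ℝ (fderiv ℝ H) q :=
    (hH.fderiv_right (m := 1) (by norm_num)).differentiableAt (by norm_num)
  have hgrad (i : ι) : HasFDerivAt (fun p => fderiv ℝ H p (e i))
      ((fderiv ℝ (fderiv ℝ H) q).flip (e i)) q := by
    simpa using hH'.hasFDerivAt.clm_apply (hasFDerivAt_const (e i) q)
  have hnum : HasLineDerivAt ℝ (fun p => ∑ i, fderiv ℝ H p (e i) ^ 2)
      (∑ i, 2 * fderiv ℝ H q (e i) * fderiv ℝ (fderiv ℝ H) q τ (e i)) q τ := by
    refine HasDerivAt.fun_sum fun i _ => ?_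
    simpa using ((hgrad i).hasLineDerivAt τ).fun_pow 2
  have hden : HasLineDerivAt ℝ H (fderiv ℝ H q τ) q τ :=
    (hH.differentiableAt (by norm_num)).hasFDerivAt.hasLineDerivAt τ
  have hquot := HasDerivAt.fun_div hnum hden (by simpa using hne)
  rw [← ((contDiffAt_fisherDensity hH hne).differentiableAt (by norm_num)).lineDeriv_eq_fderiv]
  refine (HasLineDerivAt.lineDeriv (f := fisherDensity e H) hquot).trans ?_
  simp only [zero_smul, add_zero, fisherDensity, mul_assoc, ← Finset.mul_sum]
  field_simp

lemma norm_fderiv_fisherDensity_le {c M₁ M₂ : ℝ} (hH : ContDiffAt ℝ 2 H q) (hc : 0 < c)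
    (hlow : c ≤ H q) (hM₁ : ‖fderiv ℝ H q‖ ≤ M₁) (hM₂ : ‖fderiv ℝ (fderiv ℝ H) q‖ ≤ M₂) :
    ‖fderiv ℝ (fisherDensity e H) q‖ ≤
      (∑ i, ‖e i‖ ^ 2) * (2 * M₁ * M₂ / c + M₁ ^ 3 / c ^ 2) := by
  have hpos : 0 < H q := hc.trans_le hlow
  have hM₁0 : 0 ≤ M₁ := (norm_nonneg _).trans hM₁
  have hM₂0 : 0 ≤ M₂ := (norm_nonneg (fderiv ℝ (fderiv ℝ H) q)).trans hM₂
  refine ContinuousLinearMap.opNorm_le_bound _ (by positivity) fun τ => ?_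
  have hτ : |fderiv ℝ H q τ| ≤ M₁ * ‖τ‖ := (fderiv ℝ H q).le_of_opNorm_le hM₁ τ
  have hcross : |∑ i, fderiv ℝ H q (e i) * fderiv ℝ (fderiv ℝ H) q τ (e i)|
      ≤ (∑ i, ‖e i‖ ^ 2) * (M₁ * M₂ * ‖τ‖) := by
    rw [Finset.sum_mul]
    refine (Finset.abs_sum_le_sum_abs _ _).trans (Finset.sum_le_sum fun i _ => ?_)
    calc |fderiv ℝ H q (e i) * fderiv ℝ (fderiv ℝ H) q τ (e i)|
        ≤ (M₁ * ‖e i‖) * (M₂ * ‖τ‖ * ‖e i‖) := by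
          rw [abs_mul]
          gcongr
          · exact (fderiv ℝ H q).le_of_opNorm_le hM₁ (e i)
          · exact ContinuousLinearMap.le_of_opNorm_le _
              ((fderiv ℝ (fderiv ℝ H) q).le_of_opNorm_le hM₂ τ) (e i)
      _ = ‖e i‖ ^ 2 * (M₁ * M₂ * ‖τ‖) := by ring
  rw [fderiv_fisherDensity_apply hH hpos.ne', Real.norm_eq_abs]
  calc |2 * (∑ i, fderiv ℝ H q (e i) * fderiv ℝ (fderiv ℝ H) q τ (e i)) / H q
        - fisherDensity e H q * (fderiv ℝ H q τ / H q)|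
      ≤ 2 * |∑ i, fderiv ℝ H q (e i) * fderiv ℝ (fderiv ℝ H) q τ (e i)| / H q
        + |fisherDensity e H q| * (|fderiv ℝ H q τ| / H q) := by
        refine (abs_sub _ _).trans_eq ?_
        simp only [abs_mul, abs_div, abs_of_pos hpos, abs_two]
    _ ≤ 2 * ((∑ i, ‖e i‖ ^ 2) * (M₁ * M₂ * ‖τ‖)) / c
        + (∑ i, ‖e i‖ ^ 2) * M₁ ^ 2 / c * (M₁ * ‖τ‖ / c) := by
        gcongr
        exact abs_fisherDensity_le hc hlow hM₁
    _ = (∑ i, ‖e i‖ ^ 2) * (2 * M₁ * M₂ / c + M₁ ^ 3 / c ^ 2) * ‖τ‖ := by ring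

lemma fderiv_fderiv_of_relaxation {lam ρ : ℝ} {a : E} (hH : ContDiffAt ℝ 2 H q)
    (hrelax : ∀ r : ℝ, fderiv ℝ H (q + r • a) τ = lam * (ρ - H (q + r • a))) :
    fderiv ℝ (fderiv ℝ H) q τ a = -lam * fderiv ℝ H q a := by
  have hH' : DifferentiableAt ℝ (fderiv ℝ H) q :=
    (hH.fderiv_right (m := 1) (by norm_num)).differentiableAt (by norm_num)
  have hleft : HasLineDerivAt ℝ (fun p => fderiv ℝ H p τ) (fderiv ℝ (fderiv ℝ H) q a τ) q a := by
    simpa using (hH'.hasFDerivAt.clm_apply (hasFDerivAt_const τ q)).hasLineDerivAt a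
  have hright : HasLineDerivAt ℝ (fun p => lam * (ρ - H p)) (-lam * fderiv ℝ H q a) q a := by
    simpa using (((hH.differentiableAt (by norm_num)).hasFDerivAt.const_sub ρ).const_mul
      lam).hasLineDerivAt a
  rw [hH.isSymmSndFDerivAt (by simp) τ a]
  simp only [HasLineDerivAt, hrelax] at hleft hright
  exact hleft.unique hright

lemma fderiv_fisherDensity_of_relaxation {lam ρ : ℝ} (hH : ContDiffAt ℝ 2 H q) (hne : H q ≠ 0)
    (hbase : fderiv ℝ H q τ = lam * (ρ - H q))
    (hline : ∀ i, ∀ r : ℝ, fderiv ℝ H (q + r • e i) τ = lam * (ρ - H (q + r • e i))) :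
    fderiv ℝ (fisherDensity e H) q τ =
      -lam * (fisherDensity e H q + fisherDensity e H q * (ρ / H q)) := by
  have hcross : ∑ i, fderiv ℝ H q (e i) * fderiv ℝ (fderiv ℝ H) q τ (e i)
      = -lam * (fisherDensity e H q * H q) := by
    rw [fisherDensity, div_mul_cancel₀ _ hne, Finset.mul_sum]
    refine Finset.sum_congr rfl fun i _ => ?_
    rw [fderiv_fderiv_of_relaxation hH (hline i)]
    ring
  rw [fderiv_fisherDensity_apply hH hne, hcross, hbase]
  field_simp
  ring

end FisherDensity

section Integration

lemma hasDerivAt_slice_left {P G : Type*} [NormedAddCommGroup P] [NormedSpace ℝ P]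
    [NormedAddCommGroup G] [NormedSpace ℝ G] {f : ℝ × P → G} {t : ℝ} {p : P}
    (hf : DifferentiableAt ℝ f (t, p)) :
    HasDerivAt (fun s => f (s, p)) (fderiv ℝ f (t, p) (1, 0)) t :=
  hf.hasFDerivAt.comp_hasDerivAt t ((hasDerivAt_id t).prodMk (hasDerivAt_const t p))

lemma hasDerivAt_integral_of_norm_fderiv_le {P G : Type*} [NormedAddCommGroup P] [NormedSpace ℝ P]
    [MeasurableSpace P] [OpensMeasurableSpace P] [SecondCountableTopology P]
    [NormedAddCommGroup G] [NormedSpace ℝ G] {μ : Measure P} [IsFiniteMeasure μ]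
    {f : ℝ × P → G} {t K : ℝ} (hf : ContDiff ℝ 1 f) (hint : Integrable (fun p => f (t, p)) μ)
    (hK : ∀ q, ‖fderiv ℝ f q‖ ≤ K) :
    HasDerivAt (fun s => ∫ p, f (s, p) ∂μ) (∫ p, fderiv ℝ f (t, p) (1, 0) ∂μ) t := by
  have : Continuous (fderiv ℝ f) := hf.continuous_fderiv (by norm_num)
  have hcont := hf.continuous
  refine (hasDerivAt_integral_of_dominated_loc_of_deriv_le (s := Set.univ)
    (F' := fun s p => fderiv ℝ f (s, p) (1, 0))
    (bound := fun _ => K * ‖((1 : ℝ), (0 : P))‖) univ_mem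
    (.of_forall fun s => Continuous.aestronglyMeasurable (by fun_prop)) hint
    (Continuous.aestronglyMeasurable (by fun_prop))
    (ae_of_all _ fun p s _ => (fderiv ℝ f (s, p)).le_of_opNorm_le (hK _) _)
    (integrable_const _)
    (ae_of_all _ fun p s _ => hasDerivAt_slice_left (hf.differentiable (by norm_num) _))).2

lemma gauss_eq_prod_gaussianPDFReal (d : ℕ) (v : Fin d → ℝ) :
    gauss d v = ∏ i, ProbabilityTheory.gaussianPDFReal 0 1 (v i) := by
  simp only [gauss, ProbabilityTheory.gaussianPDFReal, Finset.prod_mul_distrib, ← Real.exp_sum,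
    Finset.prod_const, Finset.card_univ, Fintype.card_fin, ← Finset.sum_div, Finset.sum_neg_distrib,
    sub_zero, NNReal.coe_one, mul_one]
  congr 1
  rw [← Real.rpow_natCast, Real.sqrt_eq_rpow, ← Real.rpow_neg (by positivity),
    ← Real.rpow_mul (by positivity)]
  ring_nf

lemma gauss_nonneg (d : ℕ) (v : Fin d → ℝ) : 0 ≤ gauss d v := by
  unfold gauss
  positivity

lemma measurable_gauss (d : ℕ) : Measurable (gauss d) := by
  unfold gauss
  fun_prop

/-- The standard Gaussian measure `ℳ(v) dv` on the velocity space `ℝ^d`. -/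
def gaussMeasure (d : ℕ) : Measure (Fin d → ℝ) :=
  volume.withDensity fun v => ENNReal.ofReal (gauss d v)

instance isProbabilityMeasure_gaussMeasure (d : ℕ) : IsProbabilityMeasure (gaussMeasure d) := by
  have hint : Integrable (gauss d) := by
    simp only [funext (gauss_eq_prod_gaussianPDFReal d)]
    exact Integrable.fintype_prod fun _ => ProbabilityTheory.integrable_gaussianPDFReal 0 1
  have hmass : ∫ v, gauss d v = 1 := by
    simp [gauss_eq_prod_gaussianPDFReal, integral_fintype_prod_volume_eq_prod,
      ProbabilityTheory.integral_gaussianPDFReal_eq_one 0 one_ne_zero]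
  constructor
  rw [gaussMeasure, withDensity_apply _ .univ, setLIntegral_univ,
    ← ofReal_integral_eq_lintegral_ofReal hint (ae_of_all _ (gauss_nonneg d)), hmass,
    ENNReal.ofReal_one]

lemma integral_gaussMeasure (d : ℕ) (f : (Fin d → ℝ) → ℝ) :
    ∫ v, f v ∂gaussMeasure d = ∫ v, f v * gauss d v := by
  rw [gaussMeasure, integral_withDensity_eq_integral_toReal_smul (measurable_gauss d).ennreal_ofReal
    (ae_of_all _ fun _ => ENNReal.ofReal_lt_top)]
  simp only [ENNReal.toReal_ofReal (gauss_nonneg d _), smul_eq_mul, mul_comm]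

/-- The measure `μ = ℳ(v) dv dx` on phase space, the torus being represented by its fundamental
domain. -/
def kineticMeasure (d : ℕ) : Measure ((Fin d → ℝ) × (Fin d → ℝ)) :=
  (volume.restrict (cube d)).prod (gaussMeasure d)

instance isFiniteMeasure_kineticMeasure (d : ℕ) : IsFiniteMeasure (kineticMeasure d) := by
  have : IsFiniteMeasure (volume.restrict (cube d)) :=
    isFiniteMeasure_restrict.2 isCompact_Icc.measure_ne_top
  unfold kineticMeasure
  infer_instance

lemma intMu_eq_integral {d : ℕ} {F : (Fin d → ℝ) → (Fin d → ℝ) → ℝ}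
    (hF : Integrable (fun p => F p.1 p.2) (kineticMeasure d)) :
    intMu d F = ∫ p, F p.1 p.2 ∂kineticMeasure d := by
  simp only [intMu, ← integral_gaussMeasure]
  exact (integral_prod _ hF).symm

lemma abs_proj_le {d : ℕ} {f : (Fin d → ℝ) → (Fin d → ℝ) → ℝ} {x : Fin d → ℝ} {C : ℝ}
    (hC : ∀ v, |f x v| ≤ C) : |proj d f x| ≤ C := by
  rw [proj, ← integral_gaussMeasure]
  simpa using norm_integral_le_of_norm_le_const (μ := gaussMeasure d) (f := f x) (ae_of_all _ hC)

lemma continuous_proj {d : ℕ} {f : (Fin d → ℝ) → (Fin d → ℝ) → ℝ} {C : ℝ}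
    (hf : Continuous fun p : (Fin d → ℝ) × (Fin d → ℝ) => f p.1 p.2)
    (hC : ∀ x v, |f x v| ≤ C) : Continuous (proj d f) := by
  unfold proj
  simp only [← integral_gaussMeasure]
  exact continuous_of_dominated (bound := fun _ => C)
    (fun x => Continuous.aestronglyMeasurable (by fun_prop))
    (fun x => ae_of_all _ (hC x)) (integrable_const C) (ae_of_all _ fun v => by fun_prop)

lemma integrable_mul_proj_div {d : ℕ} {f g : (Fin d → ℝ) × (Fin d → ℝ) → ℝ} {c C : ℝ}
    (hf : Integrable f (kineticMeasure d)) (hg : Continuous g) (hc : 0 < c)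
    (hlow : ∀ p, c ≤ g p) (hup : ∀ p, g p ≤ C) :
    Integrable (fun p => f p * (proj d (fun x v => g (x, v)) p.1 / g p)) (kineticMeasure d) := by
  have habs (p) : |g p| ≤ C := by rw [abs_of_pos (hc.trans_le (hlow p))]; exact hup p
  have hproj : Continuous (proj d fun x v => g (x, v)) := continuous_proj hg fun x v => habs (x, v)
  have hratio : Continuous fun p => proj d (fun x v => g (x, v)) p.1 / g p :=
    (hproj.comp continuous_fst).div hg fun p => (hc.trans_le (hlow p)).ne'
  refine hf.mul_bdd (c := C / c) hratio.aestronglyMeasurable (ae_of_all _ fun p => ?_)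
  rw [norm_div, Real.norm_of_nonneg (hc.le.trans (hlow p))]
  have hprojC := abs_proj_le (f := fun x v => g (x, v)) (x := p.1) fun v => habs (p.1, v)
  have hC : 0 ≤ C := (abs_nonneg _).trans (habs p)
  exact div_le_div₀ hC hprojC hc (hlow p)

end Integration

section VelocityFisher

/-- The unit vector of `ℝ × ℝ^d × ℝ^d` in the direction of the `i`-th velocity coordinate. -/
def velocityDir {d : ℕ} (i : Fin d) : ℝ × (Fin d → ℝ) × (Fin d → ℝ) := (0, 0, Pi.single i 1)

variable {d : ℕ} {H : ℝ × (Fin d → ℝ) × (Fin d → ℝ) → ℝ} {t : ℝ}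

lemma gradv_eq_fderiv_velocityDir {x v : Fin d → ℝ} (hH : DifferentiableAt ℝ H (t, x, v))
    (i : Fin d) :
    gradv d (fun y w => H (t, y, w)) x v i = fderiv ℝ H (t, x, v) (velocityDir i) := by
  have hslice : HasFDerivAt (fun w => H (t, x, w)) _ v := hH.hasFDerivAt.comp v
    ((hasFDerivAt_prodMk_right t (x, v)).comp v (hasFDerivAt_prodMk_right x v))
  rw [gradv, hslice.fderiv]
  rfl

lemma nsq_gradv_div_eq_fisherDensity {x v : Fin d → ℝ} (hH : DifferentiableAt ℝ H (t, x, v)) :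
    nsq d (gradv d (fun y w => H (t, y, w)) x v) / H (t, x, v)
      = fisherDensity velocityDir H (t, x, v) := by
  simp only [nsq, fisherDensity, gradv_eq_fderiv_velocityDir hH]

lemma IV_eq_integral_fisherDensity (hH : Differentiable ℝ H)
    (hint : Integrable (fun p => fisherDensity velocityDir H (t, p)) (kineticMeasure d)) :
    IV d (fun x v => H (t, x, v))
      = ∫ p, fisherDensity velocityDir H (t, p) ∂kineticMeasure d := by
  simp only [IV, nsq_gradv_div_eq_fisherDensity (hH _)]
  exact intMu_eq_integral hint

lemma IPiVV_eq_integral_fisherDensity (hH : Differentiable ℝ H)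
    (hint : Integrable (fun p => fisherDensity velocityDir H (t, p)
      * (proj d (fun x v => H (t, x, v)) p.1 / H (t, p))) (kineticMeasure d)) :
    IPiVV d (fun x v => H (t, x, v)) = ∫ p, fisherDensity velocityDir H (t, p)
      * (proj d (fun x v => H (t, x, v)) p.1 / H (t, p)) ∂kineticMeasure d := by
  simp only [IPiVV, nsq_gradv_div_eq_fisherDensity (hH _)]
  exact intMu_eq_integral hint

lemma integrable_fisherDensity {c M : ℝ} (hH : ContDiff ℝ 2 H) (hc : 0 < c) (hlow : ∀ q, c ≤ H q)
    (hM : ∀ q, ‖fderiv ℝ H q‖ ≤ M) :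
    Integrable (fun p => fisherDensity velocityDir H (t, p)) (kineticMeasure d) := by
  have hcont : Continuous (fisherDensity velocityDir H) := continuous_iff_continuousAt.2 fun q =>
    (contDiffAt_fisherDensity hH.contDiffAt (hc.trans_le (hlow q)).ne').continuousAt
  exact .of_bound (Continuous.aestronglyMeasurable (by fun_prop)) _
    (ae_of_all _ fun p => abs_fisherDensity_le hc (hlow _) (hM _))

lemma fderiv_fisherDensity_time {lam : ℝ} (hH : ContDiff ℝ 2 H) (hne : ∀ q, H q ≠ 0)
    (hrelax : ∀ x v, deriv (fun s => H (s, x, v)) t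
      = lam * (proj d (fun x v => H (t, x, v)) x - H (t, x, v)))
    (p : (Fin d → ℝ) × (Fin d → ℝ)) :
    fderiv ℝ (fisherDensity velocityDir H) (t, p) (1, 0) =
      -lam * (fisherDensity velocityDir H (t, p) + fisherDensity velocityDir H (t, p)
        * (proj d (fun x v => H (t, x, v)) p.1 / H (t, p))) := by
  have htime (x v) : fderiv ℝ H (t, x, v) (1, 0)
      = lam * (proj d (fun x v => H (t, x, v)) x - H (t, x, v)) := by
    rw [← hrelax, (hasDerivAt_slice_left (hH.differentiable (by norm_num) _)).deriv]
  refine fderiv_fisherDensity_of_relaxation hH.contDiffAt (hne _) (htime p.1 p.2) fun i r => ?_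
  have hshift : (t, p) + r • velocityDir i = (t, p.1, p.2 + r • Pi.single i 1) := by
    ext <;> simp [velocityDir]
  rw [hshift]
  exact htime _ _

end VelocityFisher

theorem velocity_fisher_collision_general {d : ℕ} {lam c t : ℝ}
    {H : ℝ × (Fin d → ℝ) × (Fin d → ℝ) → ℝ} (hsmooth : ContDiff ℝ 2 H)
    (hc : 0 < c) (hlow : ∀ q, c ≤ H q)
    (hbdd : ∀ n ≤ 2, ∃ M, ∀ q, ‖iteratedFDeriv ℝ n H q‖ ≤ M)
    (hrelax : ∀ x v, deriv (fun s => H (s, x, v)) t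
      = lam * (proj d (fun y w => H (t, y, w)) x - H (t, x, v))) :
    HasDerivAt (fun s => IV d fun x v => H (s, x, v))
      (-lam * (IV d (fun x v => H (t, x, v)) + IPiVV d fun x v => H (t, x, v))) t := by
  have hne (q) : H q ≠ 0 := (hc.trans_le (hlow q)).ne'
  have hdiff : Differentiable ℝ H := hsmooth.differentiable (by norm_num)
  obtain ⟨M₀, hM₀⟩ := hbdd 0 (by norm_num)
  obtain ⟨M₁, hM₁⟩ := hbdd 1 (by norm_num)
  obtain ⟨M₂, hM₂⟩ := hbdd 2 le_rfl
  simp only [norm_iteratedFDeriv_zero] at hM₀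
  simp only [norm_iteratedFDeriv_one] at hM₁
  simp only [← norm_iteratedFDeriv_fderiv (n := 1), norm_iteratedFDeriv_one] at hM₂
  have hint (s) := integrable_fisherDensity (t := s) hsmooth hc hlow hM₁
  have hintProj := integrable_mul_proj_div (hint t) (g := fun p => H (t, p))
    (hsmooth.continuous.comp (by fun_prop)) hc (fun p => hlow _)
    fun p => (le_abs_self _).trans (hM₀ _)
  have hderiv := hasDerivAt_integral_of_norm_fderiv_le (f := fisherDensity velocityDir H)
    (contDiff_iff_contDiffAt.2 fun q => contDiffAt_fisherDensity hsmooth.contDiffAt (hne q))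
    (hint t) fun q =>
      norm_fderiv_fisherDensity_le hsmooth.contDiffAt hc (hlow q) (hM₁ q) (hM₂ q)
  simp only [IV_eq_integral_fisherDensity hdiff (hint _),
    IPiVV_eq_integral_fisherDensity hdiff hintProj]
  rw [← integral_add (hint t) hintProj, ← integral_const_mul]
  simpa only [fderiv_fisherDensity_time hsmooth hne hrelax] using hderiv

/-- Evolution of the velocity Fisher information under the relaxation collision
operator: `(d/dt) I^V(h_t) = -λ (I^V(h_t) + I^{ΠV/V}(h_t))`. -/
theorem velocity_fisher_collision
    (d : ℕ) (hd : 1 ≤ d) (lam : ℝ) (hlam : 0 < lam)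
    (h : ℝ → (Fin d → ℝ) → (Fin d → ℝ) → ℝ)
    (hreg : Regular d h)
    (hpde : SolvesCollision d lam h) :
    ∀ t : ℝ, 0 ≤ t →
      HasDerivAt (fun s => IV d (h s)) (-lam * (IV d (h t) + IPiVV d (h t))) t := by
  intro t ht
  obtain ⟨hsmooth, -, ⟨_, _, hc, hbd⟩, hder⟩ := hreg
  exact velocity_fisher_collision_general (H := fun q => h q.1 q.2.1 q.2.2)
    (mod_cast contDiff_infty.1 hsmooth 2) hc
    (fun _ => (hbd _ _ _).1) (fun n _ => hder n) fun x v => hpde t x v ht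

end
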